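/- arXiv:1607.02334 — 3 statements merged into one kernel-verified Lean document; each statement's English description precedes it below -/
import Mathlib

section
/- For every integer ℓ ≥ 2 there exists a finite tree T of diameter at most 6ℓ and vertices u, v of T such that for every integer i with 1 ≤ i ≤ ℓ−1, BC_{2i}(u) > BC_{2i}(v) and BC_{2i+1}(v) > BC_{2i+1}(u). In particular, the profiles of u and v cross Ω(ℓ) times while the diameter of T is Θ(ℓ). -/
open scoped Classical

noncomputable section

/-- `v` is an interior vertex of the (unique, in a tree) shortest `s`–`t` path:
`v ≠ s`, `v ≠ t`, and `dist s v + dist v t = dist s t`. -/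
def IsInterior {V : Type*} (G : SimpleGraph V) (v s t : V) : Prop :=
  v ≠ s ∧ v ≠ t ∧ G.dist s v + G.dist v t = G.dist s t

/-- `Pvtx G k v` : the number of unordered pairs `{s,t}` of vertices with
`2 ≤ dist s t ≤ k` such that `v` is an interior vertex of the `s`–`t` path
(counted as ordered pairs and divided by two). -/
def Pvtx {V : Type*} [Fintype V] (G : SimpleGraph V) (k : ℕ) (v : V) : ℕ :=
  (Finset.univ.filter (fun p : V × V =>
    2 ≤ G.dist p.1 p.2 ∧ G.dist p.1 p.2 ≤ k ∧ IsInterior G v p.1 p.2)).card / 2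

/-- `Ptot G k` : the number of unordered pairs `{s,t}` of vertices with
`2 ≤ dist s t ≤ k` (counted as ordered pairs and divided by two). -/
def Ptot {V : Type*} [Fintype V] (G : SimpleGraph V) (k : ℕ) : ℕ :=
  (Finset.univ.filter (fun p : V × V =>
    2 ≤ G.dist p.1 p.2 ∧ G.dist p.1 p.2 ≤ k)).card / 2

/-- The normalized `k`-betweenness centrality `BC_k(v) = P_k(v) / P_k`. -/
def BC {V : Type*} [Fintype V] (G : SimpleGraph V) (k : ℕ) (v : V) : ℝ :=
  (Pvtx G k v : ℝ) / (Ptot G k : ℝ)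

/-- The diameter of a finite graph: the maximum of `dist s t` over all pairs. -/
def diam {V : Type*} [Fintype V] (G : SimpleGraph V) : ℕ :=
  Finset.univ.sup (fun p : V × V => G.dist p.1 p.2)

end

/-!
Join two vertices `u` and `v` by an edge and let a path, carrying pendant leaves, grow out of each
of them. Comparing `BC_k(u)` with `BC_k(v)` amounts to comparing the pairs whose path passes through
exactly one of the two. Attach a single leaf `x` to `u` and none to `v`, and let `A` and `B` be the
numbers of vertices at distance `1, …, k - 1` from `u` and from `v` on the respective arm. The pairs
through `u` only are `{x, v}`, `{a, x}` and `{a, v}`, which makes `2 * A + 1` of them, and the pairs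
through `v` only are the `B` pairs `{u, b}`. One leaf at every even depth of the first arm and four
at every odd depth of the second let both counts grow by `6` whenever `k` grows by `2`, with `B`
doing so in larger steps; hence the sign of `2 * A + 1 - B` alternates.
-/
section Distance

variable {V W : Type*} {G : SimpleGraph V} {H : SimpleGraph W}

lemma reachable_of_descent {t : V} {f : V → ℕ}
    (hdescent : ∀ s, s ≠ t → ∃ r, G.Adj s r ∧ f s = f r + 1) (s : V) : G.Reachable s t := by
  induction hn : f s using Nat.strong_induction_on generalizing s with
  | _ n ih =>
    by_cases hst : s = t
    · rw [hst]
    · obtain ⟨r, hsr, hfr⟩ := hdescent s hst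
      exact hsr.reachable.trans (ih (f r) (by omega) r rfl)

lemma dist_eq_of_descent {t : V} {f : V → ℕ} (ht : f t = 0)
    (hadj : ∀ s r, G.Adj s r → f s ≤ f r + 1)
    (hdescent : ∀ s, s ≠ t → ∃ r, G.Adj s r ∧ f s = f r + 1) (s : V) : G.dist s t = f s := by
  refine le_antisymm ?_ ?_
  · induction hn : f s using Nat.strong_induction_on generalizing s with
    | _ n ih =>
      by_cases hst : s = t
      · simp [hst]
      · obtain ⟨r, hsr, hfr⟩ := hdescent s hst
        have hrt := ih (f r) (by omega) r rfl
        have htriangle := hsr.reachable.dist_triangle_left t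
        have hone := SimpleGraph.dist_eq_one_iff_adj.2 hsr
        omega
  · obtain ⟨p, hp⟩ := (reachable_of_descent hdescent s).exists_walk_length_eq_dist
    rw [← hp]
    clear hp
    induction p with
    | nil => exact ht.le
    | cons hsr p ih =>
      rw [SimpleGraph.Walk.length_cons]
      exact (hadj _ _ hsr).trans (Nat.succ_le_succ (ih ht hdescent))

lemma dist_iso (φ : G ≃g H) (s t : V) : H.dist (φ s) (φ t) = G.dist s t := by
  simp only [SimpleGraph.dist_eq_sInf]
  congr 1
  ext n
  constructor
  · rintro ⟨p, rfl⟩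
    exact ⟨(p.map φ.symm.toHom).copy (φ.symm_apply_apply s) (φ.symm_apply_apply t), by simp⟩
  · rintro ⟨p, rfl⟩
    exact ⟨p.map φ.toHom, p.length_map φ.toHom⟩

/- A vertex of maximal rank on a cycle would have two distinct neighbours of at most its rank. -/
lemma isAcyclic_of_rank {α : Type*} [LinearOrder α] (rank : V → α)
    (huniq : ∀ s r r', G.Adj s r → G.Adj s r' → rank r ≤ rank s → rank r' ≤ rank s → r = r') :
    G.IsAcyclic := by
  intro v c hc
  obtain ⟨s, hs, hmax⟩ := c.support.toFinset.exists_max_image rank ⟨v, by simp⟩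
  rw [List.mem_toFinset] at hs
  have hcycle : (c.rotate s hs).IsCycle := hc.rotate hs
  have hrank (r : V) (hr : r ∈ (c.rotate s hs).support) : rank r ≤ rank s :=
    hmax r (by simpa using hr)
  refine hcycle.snd_ne_penultimate (huniq s _ _ ?_ ?_ (hrank _ ?_) (hrank _ ?_))
  · exact (c.rotate s hs).adj_snd hcycle.not_nil
  · exact ((c.rotate s hs).adj_penultimate hcycle.not_nil).symm
  · exact (c.rotate s hs).getVert_mem_support _
  · exact (c.rotate s hs).getVert_mem_support _

lemma isInterior_iso (φ : G ≃g H) {v s t : V} :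
    IsInterior H (φ v) (φ s) (φ t) ↔ IsInterior G v s t := by
  simp only [IsInterior, dist_iso, ne_eq, φ.injective.eq_iff]

end Distance

section Betweenness

variable {V W : Type*} [Fintype V] [Fintype W] {G : SimpleGraph V} {H : SimpleGraph W}

/-- The ordered pairs counted by `Pvtx G k v`. -/
noncomputable def pairsThrough (G : SimpleGraph V) (k : ℕ) (v : V) : Finset (V × V) :=
  Finset.univ.filter fun p =>
    2 ≤ G.dist p.1 p.2 ∧ G.dist p.1 p.2 ≤ k ∧ IsInterior G v p.1 p.2

lemma mem_pairsThrough (hG : G.Connected) {k : ℕ} {v s t : V} :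
    (s, t) ∈ pairsThrough G k v ↔ G.dist s t ≤ k ∧ IsInterior G v s t := by
  simp only [pairsThrough, Finset.mem_filter, Finset.mem_univ, true_and, and_iff_right_iff_imp]
  rintro ⟨-, hvs, hvt, hdist⟩
  have hsv := hG.pos_dist_of_ne hvs.symm
  have hvt := hG.pos_dist_of_ne hvt
  omega

lemma BC_lt_BC_of_card_sdiff [DecidableEq V] {k : ℕ} {a b : V}
    (h : (pairsThrough G k a \ pairsThrough G k b).card + 2 ≤
      (pairsThrough G k b \ pairsThrough G k a).card) :
    BC G k a < BC G k b := by
  have hcard : (pairsThrough G k a).card + 2 ≤ (pairsThrough G k b).card := by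
    have ha := Finset.card_sdiff_add_card_inter (pairsThrough G k a) (pairsThrough G k b)
    have hb := Finset.card_sdiff_add_card_inter (pairsThrough G k b) (pairsThrough G k a)
    rw [Finset.inter_comm] at hb
    omega
  have hlt : Pvtx G k a < Pvtx G k b :=
    show (pairsThrough G k a).card / 2 < (pairsThrough G k b).card / 2 by omega
  have hle : Pvtx G k b ≤ Ptot G k :=
    Nat.div_le_div_right <| Finset.card_le_card <|
      Finset.monotone_filter_right _ fun _ _ hp => ⟨hp.1, hp.2.1⟩
  have hpos : 0 < Ptot G k := by omega
  exact div_lt_div_of_pos_right (Nat.cast_lt.2 hlt) (Nat.cast_pos.2 hpos)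

lemma BC_iso (φ : G ≃g H) (k : ℕ) (v : V) : BC H k (φ v) = BC G k v := by
  have hPvtx : Pvtx G k v = Pvtx H k (φ v) := congrArg (· / 2) <|
    Finset.card_equiv (φ.toEquiv.prodCongr φ.toEquiv) (by simp [dist_iso, isInterior_iso])
  have hPtot : Ptot G k = Ptot H k := congrArg (· / 2) <|
    Finset.card_equiv (φ.toEquiv.prodCongr φ.toEquiv) (by simp [dist_iso])
  rw [BC, BC, hPvtx, hPtot]

lemma diam_iso_le (φ : G ≃g H) : diam H ≤ diam G := by
  refine Finset.sup_le fun p _ => ?_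
  rw [← dist_iso φ.symm]
  exact Finset.le_sup (f := fun q : V × V => G.dist q.1 q.2)
    (Finset.mem_univ (φ.symm p.1, φ.symm p.2))

end Betweenness

lemma card_eq_two_mul_of_mem_iff_or_swap_mem {α : Type*} {S P : Finset (α × α)}
    (hS : ∀ s t, (s, t) ∈ S ↔ (s, t) ∈ P ∨ (t, s) ∈ P)
    (hP : ∀ s t, (s, t) ∈ P → (t, s) ∉ P) : S.card = 2 * P.card := by
  have hunion : S = P ∪ P.image Prod.swap := by
    ext ⟨s, t⟩
    simp [hS]
  have hdisj : Disjoint P (P.image Prod.swap) := by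
    rw [Finset.disjoint_left]
    rintro ⟨s, t⟩ hst hswap
    exact hP s t hst (by simpa using hswap)
  rw [hunion, Finset.card_union_of_disjoint hdisj,
    Finset.card_image_of_injective _ Prod.swap_injective, two_mul]

/-- Vertices of the caterpillar formed by two arms, indexed by `Bool`, whose depth-`0` vertices are
joined by an edge; `w b d` leaves hang from the vertex of depth `d ≤ n` on arm `b`. The vertex
`⟨(b, d), none⟩` lies on the spine and `⟨(b, d), some i⟩` is the `i`-th leaf attached to it. -/
abbrev CaterpillarVertex (n : ℕ) (w : Bool → ℕ → ℕ) : Type :=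
  Σ a : Bool × Fin (n + 1), Option (Fin (w a.1 a.2))

namespace CaterpillarVertex

variable {n : ℕ} {w : Bool → ℕ → ℕ} {s t : CaterpillarVertex n w}

/-- The position along the spine: arm `false` occupies `-n, …, 0` and arm `true` occupies
`1, …, n + 1`. -/
def pos (s : CaterpillarVertex n w) : ℤ :=
  if s.1.1 then s.1.2 + 1 else -s.1.2

/-- The distance to the spine: `0` for spine vertices and `1` for leaves. -/
def height (s : CaterpillarVertex n w) : ℕ :=
  s.2.elim 0 fun _ => 1

/-- The spine vertex of depth `0` on arm `b`. -/
def center (b : Bool) : CaterpillarVertex n w :=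
  ⟨(b, 0), none⟩

@[simp]
lemma pos_false (d : Fin (n + 1)) (o : Option (Fin (w false d))) :
    pos (w := w) ⟨(false, d), o⟩ = -d := rfl

@[simp]
lemma pos_true (d : Fin (n + 1)) (o : Option (Fin (w true d))) :
    pos (w := w) ⟨(true, d), o⟩ = d + 1 := rfl

@[simp]
lemma height_none (a : Bool × Fin (n + 1)) : height (w := w) ⟨a, none⟩ = 0 := rfl

@[simp]
lemma height_some (a : Bool × Fin (n + 1)) (i : Fin (w a.1 a.2)) :
    height (w := w) ⟨a, some i⟩ = 1 := rfl

lemma height_le_one (s : CaterpillarVertex n w) : s.height ≤ 1 := by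
  rcases s with ⟨a, _ | _⟩ <;> simp [height]

lemma pos_mem_Icc (s : CaterpillarVertex n w) : s.pos ∈ Set.Icc (-n : ℤ) (n + 1) := by
  rcases s with ⟨⟨_ | _, d⟩, o⟩ <;>
    simp only [pos_false, pos_true, Set.mem_Icc] <;> omega

lemma fst_eq_of_pos_eq (h : s.pos = t.pos) : s.1 = t.1 := by
  rcases s with ⟨⟨_ | _, d⟩, o⟩ <;> rcases t with ⟨⟨_ | _, e⟩, o'⟩ <;>
    simp only [pos_false, pos_true, Prod.mk.injEq, Fin.ext_iff, reduceCtorEq, true_and,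
      false_and] at h ⊢ <;> omega

lemma eq_of_height_eq_zero (hpos : s.pos = t.pos) (hs : s.height = 0) (ht : t.height = 0) :
    s = t := by
  obtain ⟨a, o⟩ := s
  obtain ⟨a', o'⟩ := t
  obtain rfl : a = a' := fst_eq_of_pos_eq hpos
  rcases o with _ | _ <;> rcases o' with _ | _ <;> simp_all [height]

lemma eq_iff_of_leaves_le_one (hw : w t.1.1 t.1.2 ≤ 1) :
    s = t ↔ s.pos = t.pos ∧ s.height = t.height := by
  refine ⟨by rintro rfl; exact ⟨rfl, rfl⟩, fun ⟨hpos, hheight⟩ => ?_⟩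
  obtain ⟨a, o⟩ := s
  obtain ⟨a', o'⟩ := t
  obtain rfl : a = a' := fst_eq_of_pos_eq hpos
  have : Subsingleton (Fin (w a.1 a.2)) := Fin.subsingleton_iff_le_one.2 hw
  rcases o with _ | i <;> rcases o' with _ | i'
  · rfl
  · simp [height] at hheight
  · simp [height] at hheight
  · rw [Subsingleton.elim i i']

lemma exists_pos_eq {p : ℤ} (hp : p ∈ Set.Icc (-n : ℤ) (n + 1)) :
    ∃ s : CaterpillarVertex n w, s.pos = p ∧ s.height = 0 := by
  obtain ⟨hlower, hupper⟩ := hp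
  by_cases hsign : p ≤ 0
  · exact ⟨⟨(false, ⟨(-p).toNat, by omega⟩), none⟩, by simp only [pos_false]; omega, rfl⟩
  · exact ⟨⟨(true, ⟨(p - 1).toNat, by omega⟩), none⟩, by simp only [pos_true]; omega, rfl⟩

end CaterpillarVertex

open CaterpillarVertex

/-- The caterpillar on `CaterpillarVertex n w`: consecutive spine vertices are adjacent, and so are
a leaf and the spine vertex at its position. -/
def caterpillar (n : ℕ) (w : Bool → ℕ → ℕ) : SimpleGraph (CaterpillarVertex n w) where
  Adj s t := (s.pos - t.pos).natAbs + s.height + t.height = 1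
  symm := ⟨fun s t h => by omega⟩
  loopless := ⟨fun s h => by omega⟩

namespace caterpillar

variable {n : ℕ} {w : Bool → ℕ → ℕ} {s t : CaterpillarVertex n w}

lemma adj_iff : (caterpillar n w).Adj s t ↔ (s.pos - t.pos).natAbs + s.height + t.height = 1 :=
  Iff.rfl

/-- A formula for the distance between two vertices of the caterpillar; see `dist_eq_gap`. -/
def gap (s t : CaterpillarVertex n w) : ℕ :=
  if s = t then 0 else (s.pos - t.pos).natAbs + s.height + t.height

lemma gap_of_ne (hst : s ≠ t) : gap s t = (s.pos - t.pos).natAbs + s.height + t.height :=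
  if_neg hst

lemma gap_of_height_eq_zero (hs : s.height = 0) :
    gap s t = (s.pos - t.pos).natAbs + t.height := by
  by_cases hst : s = t
  · subst hst
    simp [gap, hs]
  · rw [gap_of_ne hst, hs, add_zero]

lemma gap_le_gap_add_one {r : CaterpillarVertex n w} (hsr : (caterpillar n w).Adj s r) :
    gap s t ≤ gap r t + 1 := by
  rw [adj_iff] at hsr
  by_cases hst : s = t
  · simp [gap, hst]
  · by_cases hrt : r = t
    · rw [gap_of_ne hst, ← hrt]
      omega
    · rw [gap_of_ne hst, gap_of_ne hrt]
      omega

lemma exists_adj_gap_eq_add_one (hst : s ≠ t) :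
    ∃ r, (caterpillar n w).Adj s r ∧ gap s t = gap r t + 1 := by
  obtain ⟨hs_lower, hs_upper⟩ := s.pos_mem_Icc
  obtain ⟨ht_lower, ht_upper⟩ := t.pos_mem_Icc
  have hs_height := s.height_le_one
  have ht_height := t.height_le_one
  have step (p : ℤ) (hp : p ∈ Set.Icc (-n : ℤ) (n + 1)) (hadj : (s.pos - p).natAbs + s.height = 1)
      (hbetween : (s.pos - p).natAbs + (p - t.pos).natAbs = (s.pos - t.pos).natAbs) :
      ∃ r, (caterpillar n w).Adj s r ∧ gap s t = gap r t + 1 := by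
    obtain ⟨r, hr_pos, hr_height⟩ := exists_pos_eq (w := w) hp
    refine ⟨r, ?_, ?_⟩
    · rw [adj_iff]
      omega
    · rw [gap_of_ne hst, gap_of_height_eq_zero hr_height]
      omega
  by_cases hs_leaf : s.height = 1
  · exact step s.pos s.pos_mem_Icc (by omega) (by omega)
  rcases lt_trichotomy s.pos t.pos with hlt | heq | hgt
  · exact step (s.pos + 1) ⟨by omega, by omega⟩ (by omega) (by omega)
  · have ht_leaf : t.height ≠ 0 := fun ht => hst (eq_of_height_eq_zero heq (by omega) ht)
    refine ⟨t, ?_, ?_⟩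
    · rw [adj_iff]
      omega
    · rw [gap_of_ne hst, gap, if_pos rfl]
      omega
  · exact step (s.pos - 1) ⟨by omega, by omega⟩ (by omega) (by omega)

lemma dist_eq_gap (s t : CaterpillarVertex n w) : (caterpillar n w).dist s t = gap s t :=
  dist_eq_of_descent (f := (gap · t)) (if_pos rfl) (fun _ _ => gap_le_gap_add_one)
    (fun _ => exists_adj_gap_eq_add_one) s

lemma connected (n : ℕ) (w : Bool → ℕ → ℕ) : (caterpillar n w).Connected where
  preconnected _ t := reachable_of_descent (f := (gap · t))
    (fun _ => exists_adj_gap_eq_add_one) _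
  nonempty := ⟨center false⟩

lemma isAcyclic (n : ℕ) (w : Bool → ℕ → ℕ) : (caterpillar n w).IsAcyclic := by
  refine isAcyclic_of_rank (fun s => s.pos.natAbs + s.height) fun s r r' hr hr' hrank hrank' => ?_
  rw [adj_iff] at hr hr'
  exact eq_of_height_eq_zero (by omega) (by omega) (by omega)

lemma diam_le (n : ℕ) (w : Bool → ℕ → ℕ) : diam (caterpillar n w) ≤ 2 * n + 3 := by
  refine Finset.sup_le fun p _ => ?_
  obtain ⟨hs_lower, hs_upper⟩ := p.1.pos_mem_Icc
  obtain ⟨ht_lower, ht_upper⟩ := p.2.pos_mem_Icc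
  have hs_height := p.1.height_le_one
  have ht_height := p.2.height_le_one
  rw [dist_eq_gap, gap]
  split_ifs <;> omega

lemma mem_pairsThrough_iff {c : CaterpillarVertex n w} (hc : c.height = 0)
    (hw : w c.1.1 c.1.2 ≤ 1) {k : ℕ} :
    (s, t) ∈ pairsThrough (caterpillar n w) k c ↔ c ≠ s ∧ c ≠ t ∧ s.pos ≠ t.pos ∧
      (s.pos - t.pos).natAbs + s.height + t.height ≤ k ∧
      c.pos ∈ Set.uIcc s.pos t.pos := by
  have hs_height := s.height_le_one
  have ht_height := t.height_le_one
  have hs := eq_iff_of_leaves_le_one (s := s) hw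
  have ht := eq_iff_of_leaves_le_one (s := t) hw
  rw [mem_pairsThrough (connected n w), IsInterior, SimpleGraph.dist_comm (u := s) (v := c),
    ne_comm (a := c), ne_comm (a := c), ne_eq, ne_eq, hs, ht, Set.mem_uIcc]
  simp only [dist_eq_gap, gap_of_height_eq_zero hc]
  by_cases hst : s = t
  · subst hst
    simp only [gap, if_pos]
    omega
  · have hpos : s.pos = t.pos → s.pos = c.pos → s.height ≠ t.height := fun h hsc hheight =>
      hst <| (eq_iff_of_leaves_le_one
        (by rwa [← fst_eq_of_pos_eq h, fst_eq_of_pos_eq hsc])).2 ⟨h, hheight⟩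
    rw [gap_of_ne hst]
    constructor
    · rintro ⟨hk, hcs, hct, hsum⟩
      have hsc : s.pos = t.pos → s.pos = c.pos := by omega
      exact ⟨hcs, hct, by omega, hk, by omega⟩
    · rintro ⟨hcs, hct, -, hk, hbetween⟩
      exact ⟨hk, hcs, hct, by omega⟩

/-- The vertices of arm `b` other than its center that are within distance `m` of the center. -/
def arm (n : ℕ) (w : Bool → ℕ → ℕ) (b : Bool) (m : ℕ) : Finset (CaterpillarVertex n w) :=
  Finset.univ.filter fun s => s.1.1 = b ∧ 0 < s.1.2.val ∧ s.1.2 + s.height ≤ m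

lemma mem_arm_false {m : ℕ} : s ∈ arm n w false m ↔ s.pos < 0 ∧ -s.pos + s.height ≤ m := by
  rcases s with ⟨⟨_ | _, d⟩, o⟩ <;>
    simp only [arm, Finset.mem_filter, Finset.mem_univ, pos_false, pos_true, reduceCtorEq,
      true_and, false_and, false_iff] <;> omega

lemma mem_arm_true {m : ℕ} : s ∈ arm n w true m ↔ 1 < s.pos ∧ s.pos - 1 + s.height ≤ m := by
  rcases s with ⟨⟨_ | _, d⟩, o⟩ <;>
    simp only [arm, Finset.mem_filter, Finset.mem_univ, pos_false, pos_true, reduceCtorEq,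
      true_and, false_and, false_iff] <;> omega

lemma card_filter_height_le (a : Bool × Fin (n + 1)) (d m : ℕ) :
    (Finset.univ.filter fun o => d + height (w := w) ⟨a, o⟩ ≤ m).card =
      (if d ≤ m then 1 else 0) + if d < m then w a.1 a.2 else 0 := by
  rw [Finset.card_filter, Fintype.sum_option]
  simp only [height_none, height_some, add_zero, Nat.add_one_le_iff, Finset.sum_const]
  simp

lemma card_arm {b : Bool} {m : ℕ} (hm : m ≤ n) :
    (arm n w b m).card = m + ∑ d ∈ Finset.Ico 1 m, w b d := by
  have hIcc : (Finset.range (n + 1)).filter (fun d => 0 < d ∧ d ≤ m) = Finset.Icc 1 m := by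
    ext d
    simp only [Finset.mem_filter, Finset.mem_range, Finset.mem_Icc]
    omega
  have hIco : (Finset.range (n + 1)).filter (fun d => 0 < d ∧ d < m) = Finset.Ico 1 m := by
    ext d
    simp only [Finset.mem_filter, Finset.mem_range, Finset.mem_Ico]
    omega
  calc (arm n w b m).card
      = ∑ d : Fin (n + 1), if 0 < d.val then
          (Finset.univ.filter fun o => d.val + height (w := w) ⟨(b, d), o⟩ ≤ m).card else 0 := by
        simp only [arm, Finset.card_filter, Fintype.sum_sigma, Fintype.sum_prod_type]
        cases b <;> simp [ite_and]
    _ = ∑ d ∈ Finset.range (n + 1),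
          ((if 0 < d ∧ d ≤ m then 1 else 0) + if 0 < d ∧ d < m then w b d else 0) := by
        rw [← Fin.sum_univ_eq_sum_range]
        refine Finset.sum_congr rfl fun d _ => ?_
        rw [card_filter_height_le]
        split_ifs <;> simp_all
    _ = m + ∑ d ∈ Finset.Ico 1 m, w b d := by
        rw [Finset.sum_add_distrib, ← Finset.sum_filter, ← Finset.sum_filter, hIcc, hIco]
        simp

/-- The unique leaf attached to `center false`. -/
def centerLeaf (hu : w false 0 = 1) : CaterpillarVertex n w :=
  ⟨(false, 0), some ⟨0, hu.symm ▸ one_pos⟩⟩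

lemma eq_centerLeaf_iff (hu : w false 0 = 1) : s = centerLeaf hu ↔ s.pos = 0 ∧ s.height = 1 :=
  eq_iff_of_leaves_le_one hu.le

lemma eq_center_false_iff (hu : w false 0 ≤ 1) :
    s = center false ↔ s.pos = 0 ∧ s.height = 0 :=
  eq_iff_of_leaves_le_one hu

lemma height_eq_zero_of_pos_eq_one (hv : w true 0 = 0) (h : s.pos = 1) : s.height = 0 := by
  obtain ⟨a, o⟩ := s
  obtain rfl : a = (true, 0) := fst_eq_of_pos_eq (t := center true) h
  rcases o with _ | i
  · rfl
  · exact absurd i.isLt (by simp [hv])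

lemma eq_center_true_iff (hv : w true 0 = 0) : s = center true ↔ s.pos = 1 :=
  ⟨by rintro rfl; rfl, fun h => eq_of_height_eq_zero h (height_eq_zero_of_pos_eq_one hv h) rfl⟩

lemma mem_pairsThrough_center_false (hu : w false 0 ≤ 1) {k : ℕ} :
    (s, t) ∈ pairsThrough (caterpillar n w) k (center false) ↔
      (s.pos = 0 → s.height ≠ 0) ∧ (t.pos = 0 → t.height ≠ 0) ∧ s.pos ≠ t.pos ∧
      (s.pos - t.pos).natAbs + s.height + t.height ≤ k ∧
      0 ∈ Set.uIcc s.pos t.pos := by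
  have hpos : (center false : CaterpillarVertex n w).pos = 0 := rfl
  rw [mem_pairsThrough_iff rfl hu, ne_comm, ne_comm (a := center false), ne_eq, ne_eq,
    eq_center_false_iff hu, eq_center_false_iff hu, not_and, not_and, hpos]

lemma mem_pairsThrough_center_true (hv : w true 0 = 0) {k : ℕ} :
    (s, t) ∈ pairsThrough (caterpillar n w) k (center true) ↔
      s.pos ≠ 1 ∧ t.pos ≠ 1 ∧ s.pos ≠ t.pos ∧
      (s.pos - t.pos).natAbs + s.height + t.height ≤ k ∧
      1 ∈ Set.uIcc s.pos t.pos := by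
  have hpos : (center true : CaterpillarVertex n w).pos = 1 := rfl
  rw [mem_pairsThrough_iff rfl (hv.trans_le zero_le_one), ne_comm, ne_comm (a := center true),
    ne_eq, ne_eq, eq_center_true_iff hv, eq_center_true_iff hv, hpos]

/-- The pairs, one orientation each, joined by a path of length at most `m + 1` that passes through
`center false` but not through `center true`. -/
def pairsThroughFalseOnly (n : ℕ) (hu : w false 0 = 1) (m : ℕ) :
    Finset (CaterpillarVertex n w × CaterpillarVertex n w) :=
  insert (centerLeaf hu, center true) (arm n w false m ×ˢ {centerLeaf hu, center true})

lemma card_pairsThroughFalseOnly (hu : w false 0 = 1) (m : ℕ) :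
    (pairsThroughFalseOnly n hu m).card = 2 * (arm n w false m).card + 1 := by
  have hne : (centerLeaf hu : CaterpillarVertex n w) ≠ center true := fun h => by
    simpa [centerLeaf, center] using congrArg (fun s => s.1.1) h
  have hnotMem : (centerLeaf hu : CaterpillarVertex n w) ∉ arm n w false m := fun h => by
    simp [arm, centerLeaf] at h
  rw [pairsThroughFalseOnly, Finset.card_insert_of_notMem, Finset.card_product,
    Finset.card_pair hne, mul_comm]
  exact fun h => hnotMem (Finset.mem_product.1 h).1

lemma mem_pairsThroughFalseOnly (hu : w false 0 = 1) (hv : w true 0 = 0) {m : ℕ} :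
    (s, t) ∈ pairsThroughFalseOnly n hu m ↔
      s.pos = 0 ∧ s.height = 1 ∧ t.pos = 1 ∨
      (s.pos < 0 ∧ -s.pos + s.height ≤ m) ∧ (t.pos = 0 ∧ t.height = 1 ∨ t.pos = 1) := by
  simp only [pairsThroughFalseOnly, Finset.mem_insert, Finset.mem_product, Finset.mem_singleton,
    Prod.mk.injEq, eq_centerLeaf_iff hu, eq_center_true_iff hv, mem_arm_false, and_assoc]

lemma card_pairsThrough_false_sdiff_true (hu : w false 0 = 1) (hv : w true 0 = 0) {m : ℕ}
    (hm : 1 ≤ m) :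
    (pairsThrough (caterpillar n w) (m + 1) (center false) \
      pairsThrough (caterpillar n w) (m + 1) (center true)).card =
        2 * (2 * (arm n w false m).card + 1) := by
  rw [← card_pairsThroughFalseOnly hu]
  refine card_eq_two_mul_of_mem_iff_or_swap_mem (fun s t => ?_) (fun s t => ?_)
  · have hs_height := s.height_le_one
    have ht_height := t.height_le_one
    have hs_spine := height_eq_zero_of_pos_eq_one (s := s) hv
    have ht_spine := height_eq_zero_of_pos_eq_one (s := t) hv
    rw [Finset.mem_sdiff, mem_pairsThrough_center_false hu.le, mem_pairsThrough_center_true hv,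
      mem_pairsThroughFalseOnly hu hv, mem_pairsThroughFalseOnly hu hv, Set.mem_uIcc, Set.mem_uIcc]
    omega
  · rw [mem_pairsThroughFalseOnly hu hv, mem_pairsThroughFalseOnly hu hv]
    omega

lemma card_pairsThrough_true_sdiff_false (hu : w false 0 ≤ 1) (hv : w true 0 = 0) {m : ℕ} :
    (pairsThrough (caterpillar n w) (m + 1) (center true) \
      pairsThrough (caterpillar n w) (m + 1) (center false)).card =
        2 * (arm n w true m).card := by
  have hmem (s t : CaterpillarVertex n w) : (s, t) ∈ {center false} ×ˢ arm n w true m ↔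
      (s.pos = 0 ∧ s.height = 0) ∧ 1 < t.pos ∧ t.pos - 1 + t.height ≤ m := by
    rw [Finset.mem_product, Finset.mem_singleton, eq_center_false_iff hu, mem_arm_true]
  have hcard : (({center false} : Finset (CaterpillarVertex n w)) ×ˢ arm n w true m).card =
      (arm n w true m).card := by
    rw [Finset.card_product, Finset.card_singleton, one_mul]
  rw [← hcard]
  refine card_eq_two_mul_of_mem_iff_or_swap_mem (fun s t => ?_) (fun s t => ?_)
  · rw [Finset.mem_sdiff, mem_pairsThrough_center_true hv, mem_pairsThrough_center_false hu,
      hmem, hmem, Set.mem_uIcc, Set.mem_uIcc]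
    omega
  · rw [hmem, hmem]
    omega

lemma BC_center_true_lt_BC_center_false (hu : w false 0 = 1) (hv : w true 0 = 0) {m : ℕ}
    (hm : 1 ≤ m)
    (h : (arm n w true m).card < 2 * (arm n w false m).card + 1) :
    BC (caterpillar n w) (m + 1) (center true) < BC (caterpillar n w) (m + 1) (center false) := by
  apply BC_lt_BC_of_card_sdiff
  rw [card_pairsThrough_true_sdiff_false hu.le hv, card_pairsThrough_false_sdiff_true hu hv hm]
  omega

lemma BC_center_false_lt_BC_center_true (hu : w false 0 = 1) (hv : w true 0 = 0) {m : ℕ}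
    (hm : 1 ≤ m)
    (h : 2 * (arm n w false m).card + 1 < (arm n w true m).card) :
    BC (caterpillar n w) (m + 1) (center false) < BC (caterpillar n w) (m + 1) (center true) := by
  apply BC_lt_BC_of_card_sdiff
  rw [card_pairsThrough_true_sdiff_false hu.le hv, card_pairsThrough_false_sdiff_true hu hv hm]
  omega

end caterpillar

/-- The leaf counts of the caterpillar with many crossings. From depth `1` to `2 * j` an arm gets
`j` batches of leaves, `1` per batch on arm `false` and `4` per batch on arm `true`, the latter one
level ahead. With `A` and `B` the sizes of the two arms, the count `2 * A + 1` of pairs through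
`center false` only then beats `B` at every odd radius and loses to it at every even one. -/
def crossingLeaves : Bool → ℕ → ℕ
  | false, d => if Even d then 1 else 0
  | true, d => if Even d then 0 else 4

lemma sum_crossingLeaves (b : Bool) (j : ℕ) :
    ∑ d ∈ Finset.Ico 1 (2 * j + 1), crossingLeaves b d = if b then 4 * j else j := by
  induction j with
  | zero => cases b <;> rfl
  | succ j ih =>
    rw [show 2 * (j + 1) + 1 = 2 * j + 1 + 1 + 1 by ring, Finset.sum_Ico_succ_top (by omega),
      Finset.sum_Ico_succ_top (by omega), ih]
    have hodd : ¬Even (2 * j + 1) := by simp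
    have heven : Even (2 * j + 1 + 1) := ⟨j + 1, by ring⟩
    cases b
    · simp [crossingLeaves, hodd, heven]
    · simp [crossingLeaves, hodd, heven, mul_add]

namespace caterpillar

variable {n j : ℕ}

lemma card_arm_crossingLeaves_odd {b : Bool} (hj : 2 * j + 1 ≤ n) :
    (arm n crossingLeaves b (2 * j + 1)).card = if b then 6 * j + 1 else 3 * j + 1 := by
  rw [card_arm hj, sum_crossingLeaves]
  split_ifs <;> ring

lemma card_arm_crossingLeaves_even {b : Bool} (hj : 2 * j + 2 ≤ n) :
    (arm n crossingLeaves b (2 * j + 2)).card = if b then 6 * j + 6 else 3 * j + 2 := by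
  have hleaves : crossingLeaves b (2 * j + 1) = if b then 4 else 0 := by
    cases b <;> simp [crossingLeaves]
  rw [card_arm hj, Finset.sum_Ico_succ_top (by omega), sum_crossingLeaves, hleaves]
  split_ifs <;> ring

lemma BC_crossingLeaves_two_mul_lt (hj : 2 * j + 1 ≤ n) :
    BC (caterpillar n crossingLeaves) (2 * (j + 1)) (center true) <
      BC (caterpillar n crossingLeaves) (2 * (j + 1)) (center false) := by
  refine BC_center_true_lt_BC_center_false (m := 2 * j + 1) rfl rfl (by omega) ?_
  simp only [card_arm_crossingLeaves_odd hj, Bool.false_eq_true, ↓reduceIte]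
  omega

lemma BC_crossingLeaves_two_mul_add_one_lt (hj : 2 * j + 2 ≤ n) :
    BC (caterpillar n crossingLeaves) (2 * (j + 1) + 1) (center false) <
      BC (caterpillar n crossingLeaves) (2 * (j + 1) + 1) (center true) := by
  refine BC_center_false_lt_BC_center_true (m := 2 * j + 2) rfl rfl (by omega) ?_
  simp only [card_arm_crossingLeaves_even hj, Bool.false_eq_true, ↓reduceIte]
  omega

end caterpillar

/-- For any `ℓ ≥ 2` there is a tree of diameter at most `6ℓ` with two vertices `u`, `v`
whose profiles cross `Ω(ℓ)` times: `BC_{2i}(u) > BC_{2i}(v)` and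
`BC_{2i+1}(v) > BC_{2i+1}(u)` for every `1 ≤ i ≤ ℓ - 1`. -/
theorem exists_tree_with_many_crossings (l : ℕ) (hl : 2 ≤ l) :
    ∃ (N : ℕ) (G : SimpleGraph (Fin N)) (u v : Fin N), G.IsTree ∧ diam G ≤ 6 * l ∧
      ∀ i : ℕ, 1 ≤ i → i ≤ l - 1 →
        BC G (2*i) u > BC G (2*i) v ∧ BC G (2*i+1) v > BC G (2*i+1) u := by
  let T := caterpillar (2 * l) crossingLeaves
  let φ : T ≃g T.overFin rfl := T.overFinIso rfl
  have hdiam : diam T ≤ 6 * l := (caterpillar.diam_le _ _).trans (by omega)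
  refine ⟨_, T.overFin rfl, φ (center false), φ (center true), φ.isTree_iff.1 ?_,
    (diam_iso_le φ).trans hdiam, fun i hi hil => ?_⟩
  · exact ⟨caterpillar.connected _ _, caterpillar.isAcyclic _ _⟩
  · obtain ⟨j, rfl⟩ := Nat.exists_eq_add_of_le' hi
    simp only [BC_iso]
    exact ⟨caterpillar.BC_crossingLeaves_two_mul_lt (by omega),
      caterpillar.BC_crossingLeaves_two_mul_add_one_lt (by omega)⟩
end

section
/- For every real C > 0 there exist an integer d₀ and a real ε > 0 such that for every integer d ≥ d₀ there exist a finite tree T of diameter exactly d and a vertex v of T such that for every integer k with 2 ≤ k ≤ ε·d, BC_k(v) > C · BC_d(v). -/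
open scoped Classical

/-!
Take a broom: a path with `d` vertices together with `m` leaves attached to its first vertex, the
center, where `m` is a small constant fraction of `d`. Only pairs that contain a leaf can have the
center in their interior, so of all the roughly `(d + m)² / 2` pairs at most `m (d + m)` do, a
fraction of order `m / d`. For `k` small compared with `m² / d`, however, most pairs at distance
between `2` and `k` consist of two leaves, and these all have the center in their interior.
-/

open Finset
open SimpleGraph hiding diam dist_le_diam

section Distance

variable {V W : Type*} {G : SimpleGraph V} {H : SimpleGraph W}

lemma exists_walk_length_eq_of_exists_adj {f : V → ℕ} {v : V} (hzero : ∀ u, f u = 0 → u = v)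
    (hstep : ∀ u, f u ≠ 0 → ∃ w, G.Adj u w ∧ f w + 1 = f u) (u : V) :
    ∃ p : G.Walk u v, p.length = f u := by
  induction hn : f u generalizing u with
  | zero =>
    obtain rfl := hzero u hn
    exact ⟨.nil, rfl⟩
  | succ n ih =>
    obtain ⟨w, huw, hw⟩ := hstep u (by omega)
    obtain ⟨p, hp⟩ := ih w (by omega)
    exact ⟨.cons huw p, by rw [Walk.length_cons, hp]⟩

lemma le_add_walk_length_of_adj {f : V → ℕ} (hadj : ∀ u w, G.Adj u w → f u ≤ f w + 1) {u v : V}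
    (p : G.Walk u v) : f u ≤ f v + p.length := by
  induction p with
  | nil => simp
  | @cons u w _ huw p ih =>
    have := hadj u w huw
    rw [Walk.length_cons]
    omega

lemma dist_eq_of_adj_le_of_exists_adj {f : V → ℕ} {v : V} (hzero : ∀ u, f u = 0 ↔ u = v)
    (hadj : ∀ u w, G.Adj u w → f u ≤ f w + 1)
    (hstep : ∀ u, f u ≠ 0 → ∃ w, G.Adj u w ∧ f w + 1 = f u) (u : V) :
    G.dist u v = f u := by
  obtain ⟨p, hp⟩ := exists_walk_length_eq_of_exists_adj (fun u => (hzero u).1) hstep u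
  obtain ⟨q, hq⟩ := p.reachable.exists_walk_length_eq_dist
  have hle : f u ≤ f v + q.length := le_add_walk_length_of_adj hadj q
  rw [(hzero v).2 rfl, zero_add, hq] at hle
  exact le_antisymm (hp ▸ dist_le p) hle

lemma dist_iso_apply (e : G ≃g H) (u v : V) : H.dist (e u) (e v) = G.dist u v := by
  rw [dist_eq_sInf, dist_eq_sInf]
  congr 1
  ext n
  constructor
  · rintro ⟨p, rfl⟩
    exact ⟨(p.map e.symm.toHom).copy (e.symm_apply_apply u) (e.symm_apply_apply v), by simp⟩
  · rintro ⟨p, rfl⟩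
    exact ⟨p.map e.toHom, by simp⟩

lemma isInterior_iso_apply (e : G ≃g H) (v s t : V) :
    IsInterior H (e v) (e s) (e t) ↔ IsInterior G v s t := by
  simp only [IsInterior, dist_iso_apply, ne_eq, e.injective.eq_iff]

end Distance

section Tree

-- Every edge is of the form `{u, p u}` with `u ≠ r`, so there are fewer edges than vertices.
lemma isTree_fromRel_of_connected {V : Type*} [Finite V] {p : V → V} {r : V} (hr : p r = r)
    (hconn : (fromRel fun u v => p u = v).Connected) : (fromRel fun u v => p u = v).IsTree := by
  have := Fintype.ofFinite V
  set T : SimpleGraph V := fromRel fun u v => p u = v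
  have hedges : T.edgeFinset ⊆ (univ.erase r).image fun u => s(u, p u) := by
    intro e
    induction e with | _ a b
    simp only [mem_edgeFinset, mem_edgeSet, T, fromRel_adj, mem_image, mem_erase, mem_univ,
      and_true]
    rintro ⟨hab, rfl | rfl⟩
    · exact ⟨a, fun h => hab (by rw [h, hr]), rfl⟩
    · exact ⟨b, fun h => hab (by rw [h, hr]), Sym2.eq_swap⟩
  have hcard : #T.edgeFinset ≤ Fintype.card V - 1 :=
    calc #T.edgeFinset ≤ #((univ.erase r).image fun u => s(u, p u)) := card_le_card hedges
      _ ≤ #(univ.erase r) := card_image_le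
      _ = Fintype.card V - 1 := by rw [card_erase_of_mem (mem_univ r), card_univ]
  have hpos : 0 < Fintype.card V := Fintype.card_pos_iff.2 ⟨r⟩
  refine isTree_iff_connected_and_card.2
    ⟨hconn, le_antisymm ?_ hconn.card_vert_le_card_edgeSet_add_one⟩
  rw [Nat.card_eq_fintype_card, Nat.card_eq_fintype_card, ← edgeFinset_card]
  omega

variable {V : Type*} [Fintype V] {G : SimpleGraph V}

lemma card_filter_two_le_dist_add_degree_add_one (hG : G.Connected) (s : V) :
    #{t | 2 ≤ G.dist s t} + G.degree s + 1 = Fintype.card V := by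
  have hnear : ({t | ¬ 2 ≤ G.dist s t} : Finset V) = insert s (G.neighborFinset s) := by
    ext t
    have hself : G.dist s t = 0 ↔ t = s := hG.dist_eq_zero_iff.trans eq_comm
    have hnbr : G.dist s t = 1 ↔ G.Adj s t := dist_eq_one_iff_adj
    simp only [mem_filter, mem_univ, true_and, mem_insert, mem_neighborFinset, ← hself, ← hnbr]
    omega
  have hsplit := card_filter_add_card_filter_not (s := univ) fun t => 2 ≤ G.dist s t
  rw [hnear, card_insert_of_notMem (G.notMem_neighborFinset_self s), card_neighborFinset_eq_degree,
    card_univ] at hsplit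
  omega

lemma card_filter_two_le_dist_of_isTree (hG : G.IsTree) :
    #{p : V × V | 2 ≤ G.dist p.1 p.2} = (Fintype.card V - 1) * (Fintype.card V - 2) := by
  have hrows : #{p : V × V | 2 ≤ G.dist p.1 p.2} = ∑ s, #{t | 2 ≤ G.dist s t} := by
    simp only [card_filter, Fintype.sum_prod_type]
  have hsum : ∑ s, (#{t | 2 ≤ G.dist s t} + G.degree s + 1) = Fintype.card V * Fintype.card V := by
    simp only [card_filter_two_le_dist_add_degree_add_one hG.connected, sum_const, card_univ,
      smul_eq_mul]
  rw [sum_add_distrib, sum_add_distrib, ← hrows, G.sum_degrees_eq_twice_card_edges, sum_const,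
    card_univ, smul_eq_mul, mul_one, ← hG.card_edgeFinset] at hsum
  rw [← hG.card_edgeFinset]
  cases h : #G.edgeFinset with
  | zero => simp_all
  | succ e =>
    rw [h] at hsum
    simp only [Nat.add_sub_cancel, Nat.reduceSubDiff]
    linarith

end Tree

section Betweenness

variable {V W : Type*} [Fintype V] [Fintype W] {G : SimpleGraph V} {H : SimpleGraph W}

lemma dist_le_diam (u v : V) : G.dist u v ≤ diam G :=
  le_sup (f := fun p : V × V => G.dist p.1 p.2) (mem_univ (u, v))

lemma Pvtx_le_Ptot (G : SimpleGraph V) (k : ℕ) (v : V) : Pvtx G k v ≤ Ptot G k :=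
  Nat.div_le_div_right <| card_le_card <| monotone_filter_right _ fun _ _ h => ⟨h.1, h.2.1⟩

lemma Ptot_of_isTree (hG : G.IsTree) {k : ℕ} (hk : diam G ≤ k) :
    Ptot G k = (Fintype.card V - 1).choose 2 := by
  have hle (p : V × V) : G.dist p.1 p.2 ≤ k := (dist_le_diam _ _).trans hk
  simp only [Ptot, hle, and_true]
  rw [card_filter_two_le_dist_of_isTree hG, Nat.choose_two_right, Nat.sub_sub]

lemma diam_iso (e : G ≃g H) : diam H = diam G := by
  refine le_antisymm (Finset.sup_le fun p _ => ?_) (Finset.sup_le fun p _ => ?_)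
  · rw [← e.apply_symm_apply p.1, ← e.apply_symm_apply p.2, dist_iso_apply]
    exact dist_le_diam _ _
  · rw [← dist_iso_apply e]
    exact dist_le_diam _ _

lemma BC_iso_apply (e : G ≃g H) (k : ℕ) (v : V) : BC H k (e v) = BC G k v := by
  have hPvtx : Pvtx G k v = Pvtx H k (e v) := by
    refine congrArg (· / 2) (card_equiv (e.toEquiv.prodCongr e.toEquiv) fun p => ?_)
    simp [dist_iso_apply, isInterior_iso_apply]
  have hPtot : Ptot G k = Ptot H k := by
    refine congrArg (· / 2) (card_equiv (e.toEquiv.prodCongr e.toEquiv) fun p => ?_)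
    simp [dist_iso_apply]
  rw [BC, BC, hPvtx, hPtot]

end Betweenness

section Counting

lemma card_filter_sum_prod_sum {α β : Type*} [Fintype α] [Fintype β]
    (P : (α ⊕ β) × (α ⊕ β) → Prop) [DecidablePred P] :
    #{p | P p} = #{p : α × α | P (.inl p.1, .inl p.2)} + #{p : α × β | P (.inl p.1, .inr p.2)} +
      #{p : β × α | P (.inr p.1, .inl p.2)} + #{p : β × β | P (.inr p.1, .inr p.2)} := by
  simp only [card_filter, Fintype.sum_prod_type, Fintype.sum_sum_type, sum_add_distrib]
  ring

lemma card_filter_fin_dist_le (n k : ℕ) :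
    #{p : Fin n × Fin n | p.1 ≠ p.2 ∧ Nat.dist p.1 p.2 ≤ k} ≤ n * (2 * k) := by
  have hrow (i : Fin n) : #{j : Fin n | i ≠ j ∧ Nat.dist i j ≤ k} ≤ 2 * k :=
    calc #{j : Fin n | i ≠ j ∧ Nat.dist i j ≤ k}
        ≤ #((Icc (i - k : ℕ) (i + k)).erase i) := by
          refine card_le_card_of_injOn Fin.val (fun j hj => ?_) Fin.val_injective.injOn
          simp only [coe_filter, mem_univ, true_and, Set.mem_ofPred_eq, ne_eq, Fin.ext_iff,
            Nat.dist] at hj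
          simp only [coe_erase, Set.mem_sdiff, mem_coe, mem_Icc, Set.mem_singleton_iff]
          omega
      _ ≤ 2 * k := by
          rw [card_erase_of_mem (by simp), Nat.card_Icc]
          omega
  calc #{p : Fin n × Fin n | p.1 ≠ p.2 ∧ Nat.dist p.1 p.2 ≤ k}
      = ∑ i : Fin n, #{j : Fin n | i ≠ j ∧ Nat.dist i j ≤ k} := by
        simp only [card_filter, Fintype.sum_prod_type]
    _ ≤ ∑ _i : Fin n, 2 * k := sum_le_sum fun i _ => hrow i
    _ = n * (2 * k) := by simp

lemma card_filter_fst_lt_le (n k : ℕ) (β : Type*) [Fintype β] :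
    #{p : Fin n × β | (p.1 : ℕ) < k} ≤ k * Fintype.card β := by
  rw [← univ_product_univ, filter_product_left fun i : Fin n => (i : ℕ) < k, card_product,
    Fin.card_filter_val_lt, card_univ]
  exact Nat.mul_le_mul_right _ (min_le_right n k)

lemma card_filter_snd_lt_le (n k : ℕ) (β : Type*) [Fintype β] :
    #{p : β × Fin n | (p.2 : ℕ) < k} ≤ Fintype.card β * k := by
  rw [← univ_product_univ, filter_product_right fun i : Fin n => (i : ℕ) < k, card_product,
    Fin.card_filter_val_lt, card_univ]
  exact Nat.mul_le_mul_left _ (min_le_right n k)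

lemma card_filter_fst_ne_snd (α : Type*) [Fintype α] [DecidableEq α] :
    #{p : α × α | p.1 ≠ p.2} = Fintype.card α * (Fintype.card α - 1) := by
  have hoff : ({p : α × α | p.1 ≠ p.2} : Finset (α × α)) = univ.offDiag := by
    ext
    simp
  rw [hoff, offDiag_card, card_univ, Nat.mul_sub_one]

end Counting

lemma add_mul_le_choose_two {d m q k : ℕ} (hm : 2 ≤ m) (hmd : m ≤ d) (hdq : d ≤ 2 * q * m)
    (hk : 32 * q ^ 2 * k ≤ d) : (d + m) * k ≤ m.choose 2 := by
  have hq : 0 < 8 * q ^ 2 := by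
    have : q ≠ 0 := by rintro rfl; omega
    positivity
  have hsq : 4 * ((d + m) * k) ≤ m ^ 2 := by
    refine Nat.le_of_mul_le_mul_left ?_ hq
    calc 8 * q ^ 2 * (4 * ((d + m) * k)) = (d + m) * (32 * q ^ 2 * k) := by ring
      _ ≤ (d + d) * d := by gcongr
      _ = 2 * d ^ 2 := by ring
      _ ≤ 2 * (2 * q * m) ^ 2 := by gcongr
      _ = 8 * q ^ 2 * m ^ 2 := by ring
  rw [Nat.choose_two_right, Nat.le_div_iff_mul_le two_pos]
  obtain ⟨n, rfl⟩ := Nat.exists_eq_add_of_le hm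
  rw [show 2 + n - 1 = n + 1 by omega]
  nlinarith

section Broom

/-- The parent of a vertex in the broom rooted at its center `inl 0`; truncated
subtraction makes the center its own parent. -/
def broomParent (d m : ℕ) [NeZero d] : Fin d ⊕ Fin m → Fin d ⊕ Fin m
  | .inl i => .inl ⟨i - 1, by omega⟩
  | .inr _ => .inl 0

/-- The broom: a path on the `d` vertices `inl i`, with `m` leaves `inr a` attached to its end
`inl 0`. -/
def broom (d m : ℕ) [NeZero d] : SimpleGraph (Fin d ⊕ Fin m) :=
  fromRel fun u v => broomParent d m u = v

/-- The explicit formula for the graph distance of `broom d m`, shown in `dist_broom`. -/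
def broomDist (d m : ℕ) : Fin d ⊕ Fin m → Fin d ⊕ Fin m → ℕ
  | .inl i, .inl j => Nat.dist i j
  | .inl i, .inr _ => i + 1
  | .inr _, .inl j => j + 1
  | .inr a, .inr b => if a = b then 0 else 2

variable {d m k : ℕ}

lemma broomDist_eq_zero_iff (u v : Fin d ⊕ Fin m) : broomDist d m u v = 0 ↔ u = v := by
  rcases u with i | a <;> rcases v with j | b <;>
    simp [broomDist, Nat.dist, Fin.ext_iff]
  omega

variable [NeZero d]

lemma broom_adj_inl_inl (i j : Fin d) :
    (broom d m).Adj (.inl i) (.inl j) ↔ (i : ℕ) + 1 = j ∨ (j : ℕ) + 1 = i := by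
  simp only [broom, fromRel_adj, broomParent, ne_eq, Sum.inl.injEq, Fin.ext_iff]
  omega

lemma broom_adj_inl_inr (i : Fin d) (a : Fin m) :
    (broom d m).Adj (.inl i) (.inr a) ↔ (i : ℕ) = 0 := by
  simp [broom, broomParent, eq_comm]

lemma not_broom_adj_inr_inr (a b : Fin m) : ¬ (broom d m).Adj (.inr a) (.inr b) := by
  simp [broom, broomParent]

lemma broomDist_le_of_adj {u w : Fin d ⊕ Fin m} (v : Fin d ⊕ Fin m)
    (huw : (broom d m).Adj u w) : broomDist d m u v ≤ broomDist d m w v + 1 := by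
  rcases u with i | a <;> rcases w with j | b
  · rw [broom_adj_inl_inl] at huw
    rcases v with l | c <;> simp only [broomDist, Nat.dist] <;> omega
  · rw [broom_adj_inl_inr] at huw
    rcases v with l | c <;> simp only [broomDist, Nat.dist] <;> omega
  · rw [adj_comm, broom_adj_inl_inr] at huw
    rcases v with l | c <;> simp only [broomDist, Nat.dist] <;> grind
  · exact absurd huw (not_broom_adj_inr_inr a b)

lemma exists_adj_broomDist_add_one (u v : Fin d ⊕ Fin m) (huv : broomDist d m u v ≠ 0) :
    ∃ w, (broom d m).Adj u w ∧ broomDist d m w v + 1 = broomDist d m u v := by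
  rcases u with i | a
  · rcases v with j | b
    · have hij : (i : ℕ) ≠ j := fun h => huv ((broomDist_eq_zero_iff _ _).2 (by rw [Fin.ext h]))
      rcases hij.lt_or_gt with hlt | hgt
      · refine ⟨.inl ⟨i + 1, by omega⟩, (broom_adj_inl_inl _ _).2 (.inl rfl), ?_⟩
        simp only [broomDist, Nat.dist]
        omega
      · refine ⟨.inl ⟨i - 1, by omega⟩, (broom_adj_inl_inl _ _).2 (.inr ?_), ?_⟩ <;>
          simp only [broomDist, Nat.dist] <;> omega
    · rcases Nat.eq_zero_or_pos i with hi | hi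
      · exact ⟨.inr b, (broom_adj_inl_inr _ _).2 hi, by simp [broomDist, hi]⟩
      · refine ⟨.inl ⟨i - 1, by omega⟩, (broom_adj_inl_inl _ _).2 (.inr ?_), ?_⟩ <;>
          simp only [broomDist] <;> omega
  · refine ⟨.inl 0, ((broom_adj_inl_inr _ _).2 rfl).symm, ?_⟩
    rcases v with j | b
    · simp [broomDist, Nat.dist]
    · have hab : a ≠ b := fun h => huv (by simp [broomDist, h])
      simp [broomDist, hab]

lemma dist_broom (u v : Fin d ⊕ Fin m) : (broom d m).dist u v = broomDist d m u v :=
  dist_eq_of_adj_le_of_exists_adj (f := fun u => broomDist d m u v)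
    (fun u => broomDist_eq_zero_iff u v) (fun _ _ => broomDist_le_of_adj v)
    (fun u => exists_adj_broomDist_add_one u v) u

lemma connected_broom : (broom d m).Connected where
  preconnected u v := by
    obtain ⟨p, -⟩ := exists_walk_length_eq_of_exists_adj
      (fun u => (broomDist_eq_zero_iff u v).1) (fun u => exists_adj_broomDist_add_one u v) u
    exact ⟨p⟩
  nonempty := ⟨.inl 0⟩

lemma isTree_broom : (broom d m).IsTree :=
  isTree_fromRel_of_connected (r := .inl 0) (by simp [broomParent]) connected_broom

lemma diam_broom (hd : 2 ≤ d) (hm : 0 < m) : diam (broom d m) = d := by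
  refine le_antisymm (Finset.sup_le fun p _ => ?_) ?_
  · rw [dist_broom]
    rcases p with ⟨i | a, j | b⟩ <;> simp only [broomDist, Nat.dist] <;> grind
  · have hfar : (broom d m).dist (.inl ⟨d - 1, by omega⟩) (.inr ⟨0, hm⟩) = d := by
      simp only [dist_broom, broomDist]
      omega
    exact hfar.symm.le.trans (dist_le_diam _ _)

lemma not_isInterior_center_inl_inl (i j : Fin d) :
    ¬ IsInterior (broom d m) (.inl 0) (.inl i) (.inl j) := by
  simp only [IsInterior, dist_broom, broomDist, Nat.dist, ne_eq, Sum.inl.injEq, Fin.ext_iff,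
    Fin.val_zero]
  omega

lemma isInterior_center_inr_inr {a b : Fin m} (hab : a ≠ b) :
    IsInterior (broom d m) (.inl 0) (.inr a) (.inr b) := by
  simp [IsInterior, dist_broom, broomDist, hab]

lemma choose_two_le_Pvtx_broom (hk : 2 ≤ k) : m.choose 2 ≤ Pvtx (broom d m) k (.inl 0) := by
  have hleaves : m * (m - 1) ≤ #{p : Fin m × Fin m | 2 ≤ (broom d m).dist (.inr p.1) (.inr p.2) ∧
      (broom d m).dist (.inr p.1) (.inr p.2) ≤ k ∧
      IsInterior (broom d m) (.inl 0) (.inr p.1) (.inr p.2)} := by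
    refine le_trans (le_of_eq ?_) (card_le_card <| monotone_filter_right _
      fun p _ (hp : p.1 ≠ p.2) => ?_)
    · rw [card_filter_fst_ne_snd, Fintype.card_fin]
    · simpa [dist_broom, broomDist, hp, hk] using isInterior_center_inr_inr hp
  rw [Nat.choose_two_right, Pvtx, card_filter_sum_prod_sum]
  exact Nat.div_le_div_right (le_add_left hleaves)

lemma Pvtx_broom_le : Pvtx (broom d m) k (.inl 0) ≤ m * (d + m) := by
  rw [Pvtx, card_filter_sum_prod_sum]
  simp only [not_isInterior_center_inl_inl, and_false, filter_false, card_empty, zero_add]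
  refine Nat.div_le_of_le_mul ?_
  grw [card_filter_le, card_filter_le, card_filter_le]
  simp only [card_univ, Fintype.card_prod, Fintype.card_fin]
  nlinarith

lemma Ptot_broom_le : Ptot (broom d m) k ≤ m.choose 2 + (d + m) * k := by
  have hpaths : #{p : Fin d × Fin d | 2 ≤ Nat.dist p.1 p.2 ∧ Nat.dist p.1 p.2 ≤ k} ≤
      d * (2 * k) := by
    refine le_trans (card_le_card (monotone_filter_right _ fun p _ hp => ⟨fun h => ?_, hp.2⟩))
      (card_filter_fin_dist_le d k)
    simp [h] at hp
  have hpathLeaf : #{p : Fin d × Fin m | 2 ≤ (p.1 : ℕ) + 1 ∧ (p.1 : ℕ) + 1 ≤ k} ≤ k * m := by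
    refine le_trans (card_le_card (monotone_filter_right _ fun p _ hp => hp.2)) ?_
    simpa only [Fintype.card_fin] using! card_filter_fst_lt_le d k (Fin m)
  have hleafPath : #{p : Fin m × Fin d | 2 ≤ (p.2 : ℕ) + 1 ∧ (p.2 : ℕ) + 1 ≤ k} ≤ m * k := by
    refine le_trans (card_le_card (monotone_filter_right _ fun p _ hp => hp.2)) ?_
    simpa only [Fintype.card_fin] using! card_filter_snd_lt_le d k (Fin m)
  have hleaves : #{p : Fin m × Fin m | 2 ≤ (if p.1 = p.2 then 0 else 2) ∧
      (if p.1 = p.2 then 0 else 2) ≤ k} ≤ m * (m - 1) := by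
    refine le_trans (card_le_card (monotone_filter_right _ fun p _ hp h => ?_))
      ((card_filter_fst_ne_snd (Fin m)).trans_le (by rw [Fintype.card_fin]))
    simp [h] at hp
  rw [Ptot, card_filter_sum_prod_sum, Nat.choose_two_right]
  simp only [dist_broom, broomDist]
  calc _ ≤ (m * (m - 1) + 2 * ((d + m) * k)) / 2 := Nat.div_le_div_right (by linarith)
    _ = m * (m - 1) / 2 + (d + m) * k := Nat.add_mul_div_left _ _ two_pos

lemma half_le_BC_broom (hm : 2 ≤ m) (hk : 2 ≤ k) (hkm : (d + m) * k ≤ m.choose 2) :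
    1 / 2 ≤ BC (broom d m) k (.inl 0) := by
  have hleaves : m.choose 2 ≤ Pvtx (broom d m) k (.inl 0) := choose_two_le_Pvtx_broom hk
  have htot : Ptot (broom d m) k ≤ 2 * Pvtx (broom d m) k (.inl 0) := by
    linarith [Ptot_broom_le (d := d) (m := m) (k := k)]
  have hpos : 0 < Ptot (broom d m) k :=
    (Nat.choose_pos hm).trans_le (hleaves.trans (Pvtx_le_Ptot _ _ _))
  rw [BC, le_div_iff₀ (by exact_mod_cast hpos)]
  have : (Ptot (broom d m) k : ℝ) ≤ 2 * Pvtx (broom d m) k (.inl 0) := by exact_mod_cast htot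
  linarith

lemma BC_broom_le (hm : 2 ≤ m) (hmd : m ≤ d) : BC (broom d m) d (.inl 0) ≤ 4 * m / d := by
  have hd : (0 : ℝ) < d := by exact_mod_cast (by omega : 0 < d)
  have hPvtx : (Pvtx (broom d m) d (.inl 0) : ℝ) ≤ 2 * m * d := by
    have : Pvtx (broom d m) d (.inl 0) ≤ 2 * m * d := Pvtx_broom_le.trans (by nlinarith)
    exact_mod_cast this
  have hPtot : (d ^ 2 / 2 : ℝ) ≤ Ptot (broom d m) d := by
    have hchoose : (d + 1).choose 2 ≤ Ptot (broom d m) d := by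
      rw [Ptot_of_isTree isTree_broom (diam_broom (by omega) (by omega)).le]
      simp only [Fintype.card_sum, Fintype.card_fin]
      exact Nat.choose_le_choose 2 (by omega)
    calc (d ^ 2 / 2 : ℝ) ≤ ((d + 1).choose 2 : ℕ) := by
          rw [Nat.cast_choose_two]
          push_cast
          linarith
      _ ≤ Ptot (broom d m) d := by exact_mod_cast hchoose
  calc BC (broom d m) d (.inl 0) ≤ 2 * m * d / (d ^ 2 / 2) := by
        rw [BC]
        gcongr
    _ = 4 * m / d := by
        field_simp
        ring

lemma mul_BC_broom_lt_BC_broom {C : ℝ} {q : ℕ} (hC : 0 ≤ C) (hqC : 8 * C < q) (hm : 2 ≤ m)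
    (hqm : q * m ≤ d) (hdq : d ≤ 2 * q * m) (hk : 2 ≤ k) (hkq : 32 * q ^ 2 * k ≤ d) :
    C * BC (broom d m) d (.inl 0) < BC (broom d m) k (.inl 0) := by
  have hq : 0 < q := by exact_mod_cast (by positivity : 0 ≤ 8 * C).trans_lt hqC
  have hmd : m ≤ d := (Nat.le_mul_of_pos_left m hq).trans hqm
  have hd : (0 : ℝ) < d := by exact_mod_cast (by omega : 0 < d)
  have hCm : 8 * C * m < d :=
    calc 8 * C * m < q * m := by gcongr
      _ ≤ d := by exact_mod_cast hqm
  calc C * BC (broom d m) d (.inl 0) ≤ C * (4 * m / d) := by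
        gcongr
        exact BC_broom_le hm hmd
    _ < 1 / 2 := by
        rw [mul_div_assoc', div_lt_iff₀ hd]
        linarith
    _ ≤ BC (broom d m) k (.inl 0) :=
        half_le_BC_broom hm hk (add_mul_le_choose_two hm hmd hdq hkq)

end Broom

/-- `k`-betweenness centralities can be arbitrarily large relative to betweenness
centrality: for every `C > 0` there are `d₀` and `ε > 0` such that for every diameter
`d ≥ d₀` there are a tree of diameter `d` and a vertex `v` with
`BC_k(v) > C · BC_d(v)` for every `2 ≤ k ≤ ε·d`. -/
theorem BC_k_can_be_much_larger (C : ℝ) (hC : 0 < C) :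
    ∃ (d₀ : ℕ) (ε : ℝ), 0 < ε ∧ ∀ d : ℕ, d₀ ≤ d →
      ∃ (N : ℕ) (G : SimpleGraph (Fin N)) (v : Fin N), G.IsTree ∧ diam G = d ∧
        ∀ k : ℕ, 2 ≤ k → (k : ℝ) ≤ ε * (d : ℝ) → BC G k v > C * BC G d v := by
  let q : ℕ := ⌈8 * C⌉₊ + 1
  have hqC : 8 * C < q := (Nat.le_ceil _).trans_lt (by exact_mod_cast Nat.lt_succ_self _)
  refine ⟨2 * q, 1 / (32 * q ^ 2), by positivity, fun d hd => ?_⟩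
  have : NeZero d := ⟨by omega⟩
  let m : ℕ := d / q
  have hm : 2 ≤ m := (Nat.le_div_iff_mul_le (by omega)).2 hd
  have hdq : d ≤ 2 * q * m := by
    have : d < q * (m + 1) := Nat.lt_mul_div_succ d (by omega)
    nlinarith
  let e := (broom d m).overFinIso rfl
  refine ⟨_, _, e (.inl 0), e.isTree_iff.1 isTree_broom,
    (diam_iso e).trans (diam_broom (by omega) (by omega)), fun k hk hkd => ?_⟩
  have hkq : 32 * q ^ 2 * k ≤ d := by
    rw [one_div_mul_eq_div, le_div_iff₀' (by positivity)] at hkd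
    exact_mod_cast hkd
  rw [BC_iso_apply, BC_iso_apply]
  exact mul_BC_broom_lt_BC_broom hC.le hqC hm (Nat.mul_div_le d q) hdq hk hkq
end

section
/- Let i ≥ 3, j ≥ 5, and let v = c_1 in the tree G_{i,j}. Then for every integer r with 2 ≤ r ≤ i−1: P_{r(j+1)+2}(v) = r(3j+1) + 1, P_{r(j+1)+3}(v) = r(3j+1) + 2, and P_{r(j+1)+4}(v) = r(3j+1) + 5. -/
open scoped Classical

/-- Vertex type of the tree `G_{i,j}`: the central path `c_0, …, c_{i(j+1)+2}`
(encoded as `Sum.inl`), plus `2i` branches of length `j` (encoded as `Sum.inr (r, side, p)`,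
the vertex at distance `p + 1` along branch `side` attached at `c_{r(j+1)+3}`). -/
abbrev GijVertex (i j : ℕ) : Type := Fin (i*(j+1)+3) ⊕ (Fin i × Bool × Fin j)

/-- The base relation generating the edges of `G_{i,j}`. -/
def GijRel (i j : ℕ) : GijVertex i j → GijVertex i j → Prop
  | Sum.inl a, Sum.inl b => a.val + 1 = b.val
  | Sum.inl a, Sum.inr (r, _, p) => p.val = 0 ∧ a.val = r.val * (j+1) + 3
  | Sum.inr (r, s, p), Sum.inr (r', s', p') => r = r' ∧ s = s' ∧ p.val + 1 = p'.val
  | _, _ => False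

/-- The tree `G_{i,j}`: a central path of length `i(j+1)+2`, with two disjoint branches
(paths) of length `j` attached at the central vertex `c_{r(j+1)+3}` for each
`r = 0, 1, …, i-1`. -/
def Gij (i j : ℕ) : SimpleGraph (GijVertex i j) := SimpleGraph.fromRel (GijRel i j)

/-- The central-path vertex `c_a` of `G_{i,j}`. -/
def Gijc (i j a : ℕ) (h : a < i*(j+1)+3) : GijVertex i j := Sum.inl ⟨a, h⟩

/-!
The vertex `c_0` is a leaf whose only neighbour `c_1` has degree two, so a geodesic through `c_1`
must start or end at `c_0`. Hence `P_k(c_1)` is the number of vertices whose distance from `c_0`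
lies between `2` and `k`. When `k = r(j+1) + 3 + q` with `q ≤ j`, these are `k - 1` vertices of the
central path, the `2rj` vertices of the branches at the first `r` attaching vertices, and the first
`q` vertices of each of the two branches at `c_{r(j+1)+3}`. The value `k = r(j+1) + 2` is the case
`q = j` for `r - 1`.
-/

section Geodesics

variable {V : Type*} {G : SimpleGraph V} {s t u : V}

lemma exists_adj_dist_eq_dist_add_one (hG : G.Connected) (hst : s ≠ t) :
    ∃ x, G.Adj s x ∧ G.dist s t = G.dist x t + 1 := by
  obtain ⟨p, hp⟩ := hG.exists_walk_length_eq_dist s t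
  cases p with
  | nil => exact absurd rfl hst
  | @cons _ x _ hsx p =>
    have hle : G.dist x t ≤ p.length := SimpleGraph.dist_le p
    have htri : G.dist s t ≤ G.dist s x + G.dist x t := hG.dist_triangle
    rw [SimpleGraph.dist_eq_one_iff_adj.2 hsx] at htri
    rw [SimpleGraph.Walk.length_cons] at hp
    exact ⟨x, hsx, by omega⟩

lemma exists_walk_length_eq_of_height {f : V → ℕ} (hroot : ∀ t, f t = 0 → t = u)
    (hpred : ∀ t, f t ≠ 0 → ∃ s, G.Adj s t ∧ f t = f s + 1) (t : V) :
    ∃ p : G.Walk u t, p.length = f t := by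
  induction hn : f t generalizing t with
  | zero =>
    obtain rfl := hroot t hn
    exact ⟨.nil, rfl⟩
  | succ n ih =>
    obtain ⟨s, hst, hs⟩ := hpred t (by omega)
    obtain ⟨p, hp⟩ := ih s (by omega)
    exact ⟨p.concat hst, by rw [SimpleGraph.Walk.length_concat, hp]⟩

lemma height_le_height_add_length {f : V → ℕ} (hstep : ∀ s t, G.Adj s t → f t ≤ f s + 1)
    (p : G.Walk s t) : f t ≤ f s + p.length := by
  induction p with
  | nil => exact Nat.le_refl _
  | cons hadj p ih =>
    have hfirst := hstep _ _ hadj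
    rw [SimpleGraph.Walk.length_cons]
    omega

lemma dist_eq_of_height {f : V → ℕ} (hroot : ∀ t, f t = 0 ↔ t = u)
    (hstep : ∀ s t, G.Adj s t → f t ≤ f s + 1)
    (hpred : ∀ t, f t ≠ 0 → ∃ s, G.Adj s t ∧ f t = f s + 1) (t : V) :
    G.dist u t = f t := by
  obtain ⟨p, hp⟩ := exists_walk_length_eq_of_height (fun t => (hroot t).1) hpred t
  obtain ⟨q, hq⟩ := p.reachable.exists_walk_length_eq_dist
  have hle : G.dist u t ≤ p.length := SimpleGraph.dist_le p
  have hge := height_le_height_add_length hstep q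
  have hu : f u = 0 := (hroot u).2 rfl
  omega

lemma connected_of_height {f : V → ℕ} (hroot : ∀ t, f t = 0 → t = u)
    (hpred : ∀ t, f t ≠ 0 → ∃ s, G.Adj s t ∧ f t = f s + 1) : G.Connected := by
  refine (SimpleGraph.connected_iff_exists_forall_reachable G).2 ⟨u, fun t => ?_⟩
  obtain ⟨p, -⟩ := exists_walk_length_eq_of_height hroot hpred t
  exact p.reachable

end Geodesics

section PendantPath

variable {V : Type*} {G : SimpleGraph V} {s t u v w : V}

lemma isInterior_comm : IsInterior G v s t ↔ IsInterior G v t s := by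
  rw [IsInterior, IsInterior, and_left_comm, add_comm, G.dist_comm (u := v) (v := t),
    G.dist_comm (u := s) (v := v), G.dist_comm (u := s) (v := t)]

lemma dist_eq_dist_add_one_of_leaf (hG : G.Connected) (hu : ∀ x, G.Adj u x → x = v)
    (htu : t ≠ u) : G.dist u t = G.dist v t + 1 := by
  obtain ⟨x, hux, hx⟩ := exists_adj_dist_eq_dist_add_one hG htu.symm
  rwa [hu x hux] at hx

lemma dist_eq_dist_add_one_of_pendant_path (hG : G.Connected) (hu : ∀ x, G.Adj u x → x = v)
    (hv : ∀ x, G.Adj v x → x = u ∨ x = w) (htu : t ≠ u) (htv : t ≠ v) :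
    G.dist v t = G.dist w t + 1 := by
  obtain ⟨x, hvx, hx⟩ := exists_adj_dist_eq_dist_add_one hG htv.symm
  rcases hv x hvx with rfl | rfl
  · have hleaf := dist_eq_dist_add_one_of_leaf hG hu htu
    omega
  · exact hx

lemma not_isInterior_of_pendant_path (hG : G.Connected) (hu : ∀ x, G.Adj u x → x = v)
    (hv : ∀ x, G.Adj v x → x = u ∨ x = w) (hsu : s ≠ u) (htu : t ≠ u) :
    ¬ IsInterior G v s t := by
  rintro ⟨hvs, hvt, hdist⟩
  have hs := dist_eq_dist_add_one_of_pendant_path hG hu hv hsu hvs.symm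
  have ht := dist_eq_dist_add_one_of_pendant_path hG hu hv htu hvt.symm
  have hshortcut : G.dist s t ≤ G.dist s w + G.dist w t := hG.dist_triangle
  rw [G.dist_comm] at hs
  rw [G.dist_comm (u := s) (v := w)] at hshortcut
  omega

lemma isInterior_leaf_iff (hG : G.Connected) (hu : ∀ x, G.Adj u x ↔ x = v) :
    IsInterior G v u t ↔ 2 ≤ G.dist u t := by
  have huv : G.dist u v = 1 := SimpleGraph.dist_eq_one_iff_adj.2 ((hu v).2 rfl)
  constructor
  · rintro ⟨-, hvt, hdist⟩
    have hpos : 0 < G.dist v t := hG.pos_dist_of_ne hvt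
    omega
  · intro htwo
    have htu : t ≠ u := by
      rintro rfl
      rw [G.dist_self] at htwo
      omega
    have hleaf := dist_eq_dist_add_one_of_leaf hG (fun x => (hu x).1) htu
    refine ⟨((hu v).2 rfl).ne', ?_, by omega⟩
    rintro rfl
    omega

lemma isInterior_iff_of_pendant_path (hG : G.Connected) (hu : ∀ x, G.Adj u x ↔ x = v)
    (hv : ∀ x, G.Adj v x → x = u ∨ x = w) :
    IsInterior G v s t ↔ s = u ∧ 2 ≤ G.dist u t ∨ t = u ∧ 2 ≤ G.dist u s := by
  constructor
  · intro hint
    by_cases hsu : s = u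
    · subst hsu
      exact .inl ⟨rfl, (isInterior_leaf_iff hG hu).1 hint⟩
    by_cases htu : t = u
    · subst htu
      exact .inr ⟨rfl, (isInterior_leaf_iff hG hu).1 (isInterior_comm.1 hint)⟩
    exact absurd hint (not_isInterior_of_pendant_path hG (fun x => (hu x).1) hv hsu htu)
  · rintro (⟨rfl, ht⟩ | ⟨rfl, hs⟩)
    · exact (isInterior_leaf_iff hG hu).2 ht
    · exact isInterior_comm.1 ((isInterior_leaf_iff hG hu).2 hs)

lemma Pvtx_eq_card_of_pendant_path [Fintype V] (hG : G.Connected)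
    (hu : ∀ x, G.Adj u x ↔ x = v) (hv : ∀ x, G.Adj v x → x = u ∨ x = w) (k : ℕ) :
    Pvtx G k v = (Finset.univ.filter fun t => 2 ≤ G.dist u t ∧ G.dist u t ≤ k).card := by
  set T := Finset.univ.filter fun t => 2 ≤ G.dist u t ∧ G.dist u t ≤ k with hT
  have hpairs : (Finset.univ.filter fun p : V × V =>
      2 ≤ G.dist p.1 p.2 ∧ G.dist p.1 p.2 ≤ k ∧ IsInterior G v p.1 p.2) =
      {u} ×ˢ T ∪ T ×ˢ {u} := by
    ext ⟨s, t⟩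
    simp only [hT, isInterior_iff_of_pendant_path hG hu hv, Finset.mem_filter, Finset.mem_univ,
      true_and, Finset.mem_union, Finset.mem_product, Finset.mem_singleton]
    constructor
    · rintro ⟨htwo, hk, ⟨rfl, -⟩ | ⟨rfl, -⟩⟩
      · exact .inl ⟨rfl, htwo, hk⟩
      · rw [G.dist_comm] at htwo hk
        exact .inr ⟨⟨htwo, hk⟩, rfl⟩
    · rintro (⟨rfl, htwo, hk⟩ | ⟨⟨htwo, hk⟩, rfl⟩)
      · exact ⟨htwo, hk, .inl ⟨rfl, htwo⟩⟩
      · rw [G.dist_comm (u := s)]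
        exact ⟨htwo, hk, .inr ⟨rfl, htwo⟩⟩
  have huT : u ∉ T := by simp [hT]
  have hdisj : Disjoint ({u} ×ˢ T) (T ×ˢ {u}) :=
    Finset.disjoint_product.2 (.inl (Finset.disjoint_singleton_left.2 huT))
  rw [Pvtx, hpairs, Finset.card_union_of_disjoint hdisj, Finset.card_product,
    Finset.card_product, Finset.card_singleton]
  omega

end PendantPath

lemma mul_add_self_le_mul_of_lt {a b : ℕ} (c : ℕ) (hab : a < b) : a * c + c ≤ b * c := by
  rw [← Nat.succ_mul]
  exact Nat.mul_le_mul_right c hab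

lemma card_fin_filter_le_le {n l k : ℕ} (hl : l < n) (hk : k < n) :
    (Finset.univ.filter fun a : Fin n => l ≤ (a : ℕ) ∧ (a : ℕ) ≤ k).card = k + 1 - l := by
  have hIcc : (Finset.univ.filter fun a : Fin n => l ≤ (a : ℕ) ∧ (a : ℕ) ≤ k) =
      Finset.Icc ⟨l, hl⟩ ⟨k, hk⟩ := by
    ext a
    simp [Fin.le_def]
  rw [hIcc, Fin.card_Icc]

namespace Gij

/-- The distance from the end `c_0` of the central path, in coordinates: the attaching vertex
`c_{r(j+1)+3}` has depth `r(j+1) + 3`, and the `p`-th vertex of a branch (counted from `0`)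
is `p + 1` further away. -/
def depth {i j : ℕ} : GijVertex i j → ℕ
  | .inl a => a
  | .inr (r, _, p) => r * (j + 1) + 3 + (p + 1)

variable {i j : ℕ}

lemma depth_eq_zero_iff (t : GijVertex i j) :
    depth t = 0 ↔ t = Gijc i j 0 (by omega) := by
  rcases t with a | ⟨r, b, p⟩
  · simp only [depth, Gijc, Sum.inl.injEq, Fin.ext_iff]
  · simp [depth, Gijc]

lemma depth_le_depth_add_one (s t : GijVertex i j) (h : (Gij i j).Adj s t) :
    depth t ≤ depth s + 1 := by
  obtain ⟨-, h⟩ := (SimpleGraph.fromRel_adj _ _ _).1 h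
  rcases s with a | ⟨r, b, p⟩ <;> rcases t with a' | ⟨r', b', p'⟩ <;>
    simp only [GijRel, depth, or_false, false_or] at h ⊢
  · omega
  · omega
  · omega
  · rcases h with ⟨rfl, -, h⟩ | ⟨rfl, -, h⟩ <;> omega

lemma adj_of_rel {s t : GijVertex i j} (hrel : GijRel i j s t) (hdepth : depth t = depth s + 1) :
    (Gij i j).Adj s t := by
  refine (SimpleGraph.fromRel_adj _ _ _).2 ⟨?_, .inl hrel⟩
  rintro rfl
  omega

lemma exists_adj_depth_eq (t : GijVertex i j) (ht : depth t ≠ 0) :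
    ∃ s, (Gij i j).Adj s t ∧ depth t = depth s + 1 := by
  suffices ∃ s, GijRel i j s t ∧ depth t = depth s + 1 by
    obtain ⟨s, hrel, hs⟩ := this
    exact ⟨s, adj_of_rel hrel hs, hs⟩
  rcases t with ⟨a, ha⟩ | ⟨r, b, ⟨p, hp⟩⟩
  · obtain ⟨a, rfl⟩ := Nat.exists_eq_succ_of_ne_zero ht
    exact ⟨.inl ⟨a, by omega⟩, rfl, rfl⟩
  · cases p with
    | zero =>
      have hattach := mul_add_self_le_mul_of_lt (j + 1) r.isLt
      exact ⟨.inl ⟨r * (j + 1) + 3, by omega⟩, ⟨rfl, rfl⟩, rfl⟩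
    | succ p => exact ⟨.inr (r, b, ⟨p, by omega⟩), ⟨rfl, rfl, rfl⟩, rfl⟩

lemma connected : (Gij i j).Connected :=
  connected_of_height (fun t => (depth_eq_zero_iff t).1) exists_adj_depth_eq

lemma dist_c0 (t : GijVertex i j) : (Gij i j).dist (Gijc i j 0 (by omega)) t = depth t :=
  dist_eq_of_height depth_eq_zero_iff depth_le_depth_add_one exists_adj_depth_eq t

lemma adj_c0_iff (t : GijVertex i j) :
    (Gij i j).Adj (Gijc i j 0 (by omega)) t ↔ t = Gijc i j 1 (by omega) := by
  rcases t with a | ⟨r, b, p⟩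
  · simp only [Gij, Gijc, GijRel, SimpleGraph.fromRel_adj, ne_eq, Sum.inl.injEq, Fin.ext_iff]
    omega
  · simp [Gij, Gijc, GijRel]

lemma eq_c0_or_eq_c2_of_adj_c1 (t : GijVertex i j)
    (h : (Gij i j).Adj (Gijc i j 1 (by omega)) t) :
    t = Gijc i j 0 (by omega) ∨ t = Gijc i j 2 (by omega) := by
  rcases t with a | ⟨r, b, p⟩
  · simp only [Gij, Gijc, GijRel, SimpleGraph.fromRel_adj, ne_eq, Sum.inl.injEq,
      Fin.ext_iff] at h ⊢
    omega
  · simp [Gij, Gijc, GijRel] at h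

lemma Pvtx_c1_eq_card_depth (k : ℕ) :
    Pvtx (Gij i j) k (Gijc i j 1 (by omega)) =
      (Finset.univ.filter fun t : GijVertex i j => 2 ≤ depth t ∧ depth t ≤ k).card := by
  simp only [Pvtx_eq_card_of_pendant_path connected adj_c0_iff eq_c0_or_eq_c2_of_adj_c1, dist_c0]

lemma depth_branch_le_iff (a r : Fin i) (b : Bool) (p : Fin j) {q : ℕ} (hq : q ≤ j) :
    depth (.inr (a, b, p) : GijVertex i j) ≤ r * (j + 1) + 3 + q ↔ a < r ∨ a = r ∧ p < q := by
  simp only [depth]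
  rcases lt_trichotomy a r with har | rfl | hra
  · have := mul_add_self_le_mul_of_lt (j + 1) har
    omega
  · omega
  · have := mul_add_self_le_mul_of_lt (j + 1) hra
    omega

lemma card_branch_depth_le (r : Fin i) {q : ℕ} (hq : q ≤ j) :
    (Finset.univ.filter fun x : Fin i × Bool × Fin j =>
      depth (.inr x : GijVertex i j) ≤ r * (j + 1) + 3 + q).card = 2 * (r * j + q) := by
  have hsplit : (Finset.univ.filter fun x : Fin i × Bool × Fin j =>
      depth (.inr x : GijVertex i j) ≤ r * (j + 1) + 3 + q) =
      Finset.Iio r ×ˢ Finset.univ ∪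
        {r} ×ˢ Finset.univ ×ˢ Finset.univ.filter fun p : Fin j => (p : ℕ) < q := by
    ext ⟨a, b, p⟩
    simp only [Finset.mem_filter_univ, depth_branch_le_iff a r b p hq, Finset.mem_union,
      Finset.mem_product, Finset.mem_Iio, Finset.mem_singleton, Finset.mem_univ, true_and, and_true]
  have hdisj : Disjoint (Finset.Iio r ×ˢ (Finset.univ : Finset (Bool × Fin j)))
      ({r} ×ˢ Finset.univ ×ˢ Finset.univ.filter fun p : Fin j => (p : ℕ) < q) :=
    Finset.disjoint_product.2 (.inl (by simp))
  rw [hsplit, Finset.card_union_of_disjoint hdisj]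
  simp only [Finset.card_product, Fin.card_Iio, Finset.card_univ, Fintype.card_prod,
    Fintype.card_bool, Fintype.card_fin, Finset.card_singleton, Fin.card_filter_val_lt,
    min_eq_right hq]
  ring

lemma card_depth_eq_add (k : ℕ) :
    (Finset.univ.filter fun t : GijVertex i j => 2 ≤ depth t ∧ depth t ≤ k).card =
      (Finset.univ.filter fun a : Fin (i * (j + 1) + 3) => 2 ≤ (a : ℕ) ∧ (a : ℕ) ≤ k).card +
      (Finset.univ.filter fun x : Fin i × Bool × Fin j =>
        depth (.inr x : GijVertex i j) ≤ k).card := by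
  have hbranch (x : Fin i × Bool × Fin j) : 2 ≤ depth (.inr x : GijVertex i j) := by
    simp only [depth]
    omega
  rw [← Finset.card_toLeft_add_card_toRight]
  congr 2 <;> ext x
  · rw [Finset.mem_toLeft, Finset.mem_filter_univ, Finset.mem_filter_univ, depth]
  · simp only [Finset.mem_toRight, Finset.mem_filter_univ, hbranch, true_and]

end Gij

theorem Gij_Pvtx_c1_general {i j r q : ℕ} (hr : r < i) (hq : q ≤ j) :
    Pvtx (Gij i j) (r * (j + 1) + 3 + q) (Gijc i j 1 (by omega)) = r * (3 * j + 1) + 3 * q + 2 := by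
  have hattach := mul_add_self_le_mul_of_lt (j + 1) hr
  rw [Gij.Pvtx_c1_eq_card_depth, Gij.card_depth_eq_add,
    card_fin_filter_le_le (by omega) (by omega), Gij.card_branch_depth_le ⟨r, hr⟩ hq]
  have hcentral : r * (j + 1) + 3 + q + 1 - 2 = r * (j + 1) + 2 + q := by omega
  rw [hcentral]
  ring

/-- In `G_{i,j}` with `i ≥ 3`, `j ≥ 5`, the number of paths (of length between 2 and `k`)
through the vertex `v = c_1`, for `k = r(j+1)+2, r(j+1)+3, r(j+1)+4` and `2 ≤ r ≤ i-1`. -/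
theorem Gij_Pvtx_c1 (i j : ℕ) (hi : 3 ≤ i) (hj : 5 ≤ j) (r : ℕ) (hr2 : 2 ≤ r)
    (hri : r ≤ i - 1) :
    Pvtx (Gij i j) (r*(j+1)+2) (Gijc i j 1 (by omega)) = r * (3*j+1) + 1 ∧
    Pvtx (Gij i j) (r*(j+1)+3) (Gijc i j 1 (by omega)) = r * (3*j+1) + 2 ∧
    Pvtx (Gij i j) (r*(j+1)+4) (Gijc i j 1 (by omega)) = r * (3*j+1) + 5 := by
  obtain ⟨n, rfl⟩ : ∃ n, r = n + 1 := ⟨r - 1, by omega⟩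
  refine ⟨?_, Gij_Pvtx_c1_general (q := 0) (by omega) (by omega),
    Gij_Pvtx_c1_general (q := 1) (by omega) (by omega)⟩
  convert Gij_Pvtx_c1_general (i := i) (r := n) (by omega) (le_refl j) using 1
  · congr 1
    ring
  · ring
end
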